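/- Consider the integer Abaffian recursion: A ∈ ℤ^{m×n} with m ≤ n, v₁,…,v_m ∈ ℤ^m, H₁ ∈ ℤ^{n×n} unimodular, and for i = 1,…,m suppose s_i = H_i Aᵀ v_i is a nonzero integer vector, δ_i = gcd of the entries of s_i, and w_i ∈ ℤⁿ satisfies w_iᵀ s_i = δ_i, with H_{i+1} = H_i − (s_i)(w_iᵀ H_i)/δ_i. Then every Abaffian H₂,…,H_{m+1} generated by this recursion is a well-defined matrix with integer entries. -/

import Mathlib

open Matrix

/-!
Each Abaffian update changes `H` by the rank-one matrix `(s / δ) (wᵀ H)`. Since `δ` divides every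
entry of `s`, the vector `s / δ` is integral, so an integral `H` stays integral.
-/

section

variable {ι κ R K : Type*}

theorem ne_zero_of_forall_dvd [SemigroupWithZero R] {d : R} {s : ι → R} (hs : s ≠ 0)
    (hd : ∀ a, d ∣ s a) : d ≠ 0 := by
  rintro rfl
  exact hs (funext fun a => zero_dvd_iff.mp (hd a))

variable [Fintype ι]

/-- The update `H ↦ H - s (wᵀ H) / δ` in one step of the Abaffian recursion. Division by `δ` is
multiplication by `δ⁻¹` on the left, so `δ = 0` leaves `H` unchanged. -/
def abaffianUpdate [DivisionRing K] (δ : K) (s w : ι → K) (H : Matrix ι κ K) : Matrix ι κ K :=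
  H - δ⁻¹ • vecMulVec s (w ᵥ* H)

theorem abaffianUpdate_smul [DivisionRing K] {δ : K} (hδ : δ ≠ 0) (t w : ι → K)
    (H : Matrix ι κ K) :
    abaffianUpdate δ (δ • t) w H = H - vecMulVec t (w ᵥ* H) := by
  rw [abaffianUpdate, smul_vecMulVec, inv_smul_smul₀ hδ]

theorem map_sub_vecMulVec_vecMul {S : Type*} [NonAssocRing R] [NonAssocRing S] (f : R →+* S)
    (t w : ι → R) (G : Matrix ι κ R) :
    (G - vecMulVec t (w ᵥ* G)).map f = G.map f - vecMulVec (f ∘ t) ((f ∘ w) ᵥ* G.map f) := by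
  ext a b
  simp [vecMulVec_apply, RingHom.map_vecMul]

theorem exists_abaffianUpdate_map_eq_map [Ring R] [DivisionRing K] {f : R →+* K} {d : R}
    (hd : f d ≠ 0) {s : ι → R} (hds : ∀ a, d ∣ s a) (w : ι → R) (G : Matrix ι κ R) :
    ∃ G' : Matrix ι κ R, abaffianUpdate (f d) (f ∘ s) (f ∘ w) (G.map f) = G'.map f := by
  choose t ht using hds
  have hs : f ∘ s = f d • (f ∘ t) := by
    ext a
    simp [ht a]
  exact ⟨G - vecMulVec t (w ᵥ* G), by
    rw [hs, abaffianUpdate_smul hd, map_sub_vecMulVec_vecMul]⟩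

theorem integer_abaffian_integrality_general [Ring R] [DivisionRing K] {f : R →+* K}
    (hf : Function.Injective f) {m : ℕ} {H : ℕ → Matrix ι κ K} {H₁ : Matrix ι κ R}
    (hH₁ : H 0 = H₁.map f) {s w : Fin m → ι → R} {δ : Fin m → R} (hs : ∀ i, s i ≠ 0)
    (hδ : ∀ i a, δ i ∣ s i a)
    (hH : ∀ i : Fin m, H (i + 1) = abaffianUpdate (f (δ i)) (f ∘ s i) (f ∘ w i) (H i)) :
    (∀ i, δ i ≠ 0) ∧ ∀ i ≤ m, ∃ G : Matrix ι κ R, H i = G.map f := by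
  have hδ₀ (i : Fin m) : δ i ≠ 0 := ne_zero_of_forall_dvd (hs i) (hδ i)
  refine ⟨hδ₀, fun j => ?_⟩
  induction j with
  | zero => exact fun _ => ⟨H₁, hH₁⟩
  | succ j ih =>
    intro hj
    obtain ⟨G, hG⟩ := ih (Nat.le_of_succ_le hj)
    let i : Fin m := ⟨j, hj⟩
    have hfδ : f (δ i) ≠ 0 := (map_ne_zero_iff f hf).mpr (hδ₀ i)
    obtain ⟨G', hG'⟩ := exists_abaffianUpdate_map_eq_map hfδ (hδ i) (w i) G
    exact ⟨G', by rw [hH i, hG, hG']⟩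

end

/-- **Integer Abaffian recursion.** With `A ∈ ℤ^{m×n}`, integer scaling vectors
`v_i`, a unimodular `H₁` (here `H 0 = H₁`, viewed in `ℚ`), nonzero integer vectors
`s_i = H_i Aᵀ v_i`, `δ_i = gcd(s_i)`, and integer vectors `w_i` with
`w_iᵀ s_i = δ_i`, the recursion `H_{i+1} = H_i − s_i (w_iᵀ H_i)/δ_i` is well
defined (`δ_i ≠ 0`) and every Abaffian `H₂,…,H_{m+1}` has integer entries. -/
theorem integer_abaffian_integrality
    (m n : ℕ) (hmn : m ≤ n)
    (A : Matrix (Fin m) (Fin n) ℤ)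
    (v : Fin m → Fin m → ℤ)
    (H1 : Matrix (Fin n) (Fin n) ℤ) (hH1 : IsUnit H1.det)
    (H : ℕ → Matrix (Fin n) (Fin n) ℚ)
    (hH0 : H 0 = H1.map (Int.cast : ℤ → ℚ))
    (s : Fin m → Fin n → ℤ)
    (hs : ∀ i : Fin m,
      (fun a => ((s i a : ℤ) : ℚ)) =
        H ↑i *ᵥ ((A.map (Int.cast : ℤ → ℚ))ᵀ *ᵥ fun k => ((v i k : ℤ) : ℚ)))
    (hs0 : ∀ i : Fin m, s i ≠ 0)
    (w : Fin m → Fin n → ℤ)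
    (hw : ∀ i : Fin m, w i ⬝ᵥ s i = Finset.univ.gcd (s i))
    (hH : ∀ i : Fin m,
      H (↑i + 1) = H ↑i -
        (((Finset.univ.gcd (s i) : ℤ) : ℚ))⁻¹ •
          vecMulVec (fun a => ((s i a : ℤ) : ℚ))
            ((fun k => ((w i k : ℤ) : ℚ)) ᵥ* H ↑i)) :
    (∀ i : Fin m, Finset.univ.gcd (s i) ≠ 0) ∧
    (∀ i : ℕ, i ≤ m → ∀ a b : Fin n, ∃ c : ℤ, H i a b = (c : ℚ)) := by
  exact (integer_abaffian_integrality_general (f := Int.castRingHom ℚ) Int.cast_injective hH0 hs0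
    (fun i a => Finset.gcd_dvd (Finset.mem_univ a)) hH).imp_right
      fun h i hi a b => (h i hi).imp' (· a b) fun _ hG => congrFun₂ hG a b
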